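/- Let C = {C_1,…,C_K} be a clustering of {1,…,n} and let A be an n×n stochastic matrix that has inter-cluster common influence w.r.t. C, has cluster-spanning-trees w.r.t. C, and has all diagonal entries positive. Let u : ℕ → ℝ be such that both |u(t)| and |Σ_{k=0}^{t} u(k)| are bounded over t, let α_1,…,α_K ∈ ℝ, and define the input I(t) ∈ ℝ^n by I_i(t) = α_p u(t) for i ∈ C_p. Then every solution of x(t+1) = A x(t) + I(t) is bounded (sup_t max_i |x_i(t)| < ∞) and intra-cluster synchronizes: |x_i(t) − x_j(t)| → 0 as t → ∞ for all i, j lying in the same cluster. -/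

import Mathlib

open Finset Filter Topology Matrix

/-- An `n × n` real matrix is stochastic if all entries are nonnegative and
every row sums to `1`. -/
def IsStochastic {n : ℕ} (A : Matrix (Fin n) (Fin n) ℝ) : Prop :=
  (∀ i j, 0 ≤ A i j) ∧ ∀ i, ∑ j, A i j = 1

/-- A clustering of `{1,…,n}`: pairwise disjoint subsets whose union is everything. -/
def IsClustering {n K : ℕ} (C : Fin K → Finset (Fin n)) : Prop :=
  (∀ p q, p ≠ q → Disjoint (C p) (C q)) ∧ ∀ i, ∃ p, i ∈ C p

/-- Reachability along directed edges of `G(A)`: edge from `j` to `i` iff `A i j > 0`. -/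
def Reaches {n : ℕ} (A : Matrix (Fin n) (Fin n) ℝ) : Fin n → Fin n → Prop :=
  Relation.ReflTransGen fun j i => 0 < A i j

/-- `A` has cluster-spanning-trees w.r.t. `C`: for each cluster there is a vertex from
which every vertex of the cluster is reachable in `G(A)`. -/
def HasClusterSpanningTrees {n K : ℕ} (C : Fin K → Finset (Fin n))
    (A : Matrix (Fin n) (Fin n) ℝ) : Prop :=
  ∀ p, ∃ v, ∀ i ∈ C p, Reaches A v i

/-- Inter-cluster common influence: `∑_{j ∈ C q} A i j` is the same for all `i ∈ C p`. -/
def InterClusterCommonInfluence {n K : ℕ} (C : Fin K → Finset (Fin n))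
    (A : Matrix (Fin n) (Fin n) ℝ) : Prop :=
  ∀ p q, ∀ i ∈ C p, ∀ i' ∈ C p, ∑ j ∈ C q, A i j = ∑ j ∈ C q, A i' j

/-- Cluster ergodicity coefficient
`μ_C(A) = min_p min_{i,j ∈ C p} ∑_k min (A i k) (A j k)`. -/
noncomputable def muC {n K : ℕ} (C : Fin K → Finset (Fin n))
    (A : Matrix (Fin n) (Fin n) ℝ) : ℝ :=
  sInf {s | ∃ p, ∃ i ∈ C p, ∃ j ∈ C p, s = ∑ k, min (A i k) (A j k)}

/-- Cluster Hajnal diameter `Δ_C(A) = max_p max_{i,j ∈ C p} max_k |A i k - A j k|`. -/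
noncomputable def DeltaC {n K : ℕ} (C : Fin K → Finset (Fin n))
    (A : Matrix (Fin n) (Fin n) ℝ) : ℝ :=
  sSup {d | ∃ p, ∃ i ∈ C p, ∃ j ∈ C p, ∃ k, d = |A i k - A j k|}

/-- The cluster-consensus subspace `S_C`. -/
def SC {n K : ℕ} (C : Fin K → Finset (Fin n)) : Set (Fin n → ℝ) :=
  {x | ∀ p, ∀ i ∈ C p, ∀ j ∈ C p, x i = x j}

/-- Left product `prodFrom A a m = A (a+m-1) * ⋯ * A (a+1) * A a` (with `m` factors). -/
def prodFrom {n : ℕ} (A : ℕ → Matrix (Fin n) (Fin n) ℝ) (a : ℕ) :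
    ℕ → Matrix (Fin n) (Fin n) ℝ
  | 0 => 1
  | m + 1 => A (a + m) * prodFrom A a m

open scoped Matrix.Norms.Operator

lemma IsStochastic.norm_mulVec_le {n : ℕ} {A : Matrix (Fin n) (Fin n) ℝ} (hA : IsStochastic A)
    (v : Fin n → ℝ) : ‖A *ᵥ v‖ ≤ ‖v‖ := by
  refine (pi_norm_le_iff_of_nonneg (norm_nonneg v)).2 fun i => ?_
  calc ‖(A *ᵥ v) i‖ ≤ ∑ j, ‖A i j * v j‖ := norm_sum_le Finset.univ fun j => A i j * v j
    _ ≤ ∑ j, A i j * ‖v‖ := by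
      refine Finset.sum_le_sum fun j _ => ?_
      rw [norm_mul, Real.norm_of_nonneg (hA.1 i j)]
      exact mul_le_mul_of_nonneg_left (norm_le_pi_norm v j) (hA.1 i j)
    _ = ‖v‖ := by rw [← Finset.sum_mul, hA.2 i, one_mul]

lemma IsStochastic.one {n : ℕ} : IsStochastic (1 : Matrix (Fin n) (Fin n) ℝ) := by
  refine ⟨fun i j => ?_, fun i => by simp [Matrix.one_apply]⟩
  rw [Matrix.one_apply]
  split_ifs <;> norm_num

lemma IsStochastic.mul {n : ℕ} {A B : Matrix (Fin n) (Fin n) ℝ} (hA : IsStochastic A)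
    (hB : IsStochastic B) : IsStochastic (A * B) := by
  refine ⟨fun i j => ?_, fun i => ?_⟩
  · rw [Matrix.mul_apply]
    exact Finset.sum_nonneg fun k _ => mul_nonneg (hA.1 i k) (hB.1 k j)
  simp only [Matrix.mul_apply]
  rw [Finset.sum_comm]
  simp only [← Finset.mul_sum, hB.2, mul_one, hA.2]

lemma IsStochastic.pow {n : ℕ} {A : Matrix (Fin n) (Fin n) ℝ} (hA : IsStochastic A) (t : ℕ) :
    IsStochastic (A ^ t) := by
  induction t with
  | zero => simpa using IsStochastic.one
  | succ t ih => rw [pow_succ]; exact ih.mul hA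

/-- If a stochastic matrix has diagonal at least `δ`, a coordinate of `A ^ k *ᵥ v` close to an
upper bound of `v` was already close to it in `v`. -/
lemma IsStochastic.pow_mul_sub_le {n : ℕ} {A : Matrix (Fin n) (Fin n) ℝ} (hA : IsStochastic A)
    {δ : ℝ} (hδ : 0 ≤ δ) (hdiag : ∀ i, δ ≤ A i i) (k : ℕ) {v : Fin n → ℝ} {M : ℝ}
    (hv : ∀ j, v j ≤ M) (i : Fin n) :
    δ ^ k * (M - v i) ≤ M - (A ^ k *ᵥ v) i := by
  have step : ∀ v : Fin n → ℝ, (∀ j, v j ≤ M) → δ * (M - v i) ≤ M - (A *ᵥ v) i := by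
    intro v hv
    have h : M - (A *ᵥ v) i = ∑ j, A i j * (M - v j) := by
      simp only [mul_sub, Finset.sum_sub_distrib, ← Finset.sum_mul, hA.2, one_mul]
      rfl
    rw [h]
    calc δ * (M - v i) ≤ A i i * (M - v i) :=
          mul_le_mul_of_nonneg_right (hdiag i) (sub_nonneg.2 (hv i))
      _ ≤ _ := Finset.single_le_sum (f := fun j => A i j * (M - v j))
          (fun j _ => mul_nonneg (hA.1 i j) (sub_nonneg.2 (hv j))) (Finset.mem_univ i)
  have bound : ∀ v : Fin n → ℝ, (∀ j, v j ≤ M) → ∀ j, (A *ᵥ v) j ≤ M := by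
    intro v hv j
    calc (A *ᵥ v) j = ∑ l, A j l * v l := rfl
      _ ≤ ∑ l, A j l * M := Finset.sum_le_sum fun l _ => mul_le_mul_of_nonneg_left (hv l) (hA.1 j l)
      _ = M := by rw [← Finset.sum_mul, hA.2, one_mul]
  induction k generalizing v with
  | zero => simp
  | succ k ih =>
    have h := ih (bound v hv)
    rw [Matrix.mulVec_mulVec, ← pow_succ] at h
    calc δ ^ (k + 1) * (M - v i) = δ ^ k * (δ * (M - v i)) := by ring
      _ ≤ δ ^ k * (M - (A *ᵥ v) i) :=
        mul_le_mul_of_nonneg_left (step v hv) (pow_nonneg hδ k)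
      _ ≤ _ := h

/-- Increments of an orbit that stay near their maximum for `k` steps force the orbit to drift. -/
lemma IsStochastic.mul_half_le_two_mul_norm {n : ℕ} {A : Matrix (Fin n) (Fin n) ℝ}
    (hA : IsStochastic A) {δ : ℝ} (hδ : 0 < δ) (hδ1 : δ ≤ 1) (hdiag : ∀ i, δ ≤ A i i) (k : ℕ)
    {x : Fin n → ℝ} {M L : ℝ} (hM : ∀ j, (A *ᵥ x - x) j ≤ M) {i : Fin n}
    (hi : L ≤ (A ^ k *ᵥ (A *ᵥ x - x)) i) (hML : M - L ≤ δ ^ k * (L / 2)) (hLM : L ≤ M) :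
    k * (L / 2) ≤ 2 * ‖x‖ := by
  set w := A *ᵥ x - x with hw
  have hbd : ∀ t j, (A ^ t *ᵥ w) j ≤ M := by
    intro t j
    have h := (hA.pow t).pow_mul_sub_le le_rfl ((hA.pow t).1 · _) 1 hM j
    rw [pow_one, pow_one, zero_mul] at h
    linarith
  have hlow : ∀ j ∈ Finset.range k, L / 2 ≤ (A ^ j *ᵥ w) i := by
    intro j hj
    have hjk : k - j + j = k := Nat.sub_add_cancel (Finset.mem_range.1 hj).le
    have h := hA.pow_mul_sub_le hδ.le hdiag (k - j) (hbd j) i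
    rw [Matrix.mulVec_mulVec, ← pow_add, hjk] at h
    have h2 : δ ^ k * (M - (A ^ j *ᵥ w) i) ≤ δ ^ (k - j) * (M - (A ^ j *ᵥ w) i) :=
      mul_le_mul_of_nonneg_right (pow_le_pow_of_le_one hδ.le hδ1 (Nat.sub_le k j))
        (sub_nonneg.2 (hbd j i))
    have h3 : M - (A ^ j *ᵥ w) i ≤ L / 2 :=
      le_of_mul_le_mul_left (by linarith) (pow_pos hδ k)
    linarith
  have hsum : ∑ j ∈ Finset.range k, (A ^ j *ᵥ w) i = (A ^ k *ᵥ x) i - x i := by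
    have h : ∀ j, (A ^ j *ᵥ w) i = (A ^ (j + 1) *ᵥ x) i - (A ^ j *ᵥ x) i := by
      intro j
      rw [hw, Matrix.mulVec_sub, Matrix.mulVec_mulVec, ← pow_succ, Pi.sub_apply]
    simp only [h, Finset.sum_range_sub (fun j => (A ^ j *ᵥ x) i), pow_zero, Matrix.one_mulVec]
  have h1 := Finset.card_nsmul_le_sum _ _ _ hlow
  rw [Finset.card_range, nsmul_eq_mul, hsum] at h1
  have h2 := (le_abs_self _).trans
    ((norm_le_pi_norm (A ^ k *ᵥ x) i).trans ((hA.pow k).norm_mulVec_le x))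
  have h3 := (neg_le_abs _).trans (norm_le_pi_norm x i)
  linarith

lemma IsStochastic.tendsto_pow_mulVec_sub {n : ℕ} {A : Matrix (Fin n) (Fin n) ℝ}
    (hA : IsStochastic A) (hdiag : ∀ i, 0 < A i i) (x : Fin n → ℝ) :
    Tendsto (fun t => A ^ t *ᵥ (A *ᵥ x - x)) atTop (𝓝 0) := by
  obtain ⟨δ, hδ, hδ1, hδA⟩ : ∃ δ : ℝ, 0 < δ ∧ δ ≤ 1 ∧ ∀ i, δ ≤ A i i := by
    rcases isEmpty_or_nonempty (Fin n) with h | h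
    · exact ⟨1, one_pos, le_rfl, fun i => h.elim i⟩
    · obtain ⟨i, hi⟩ := Finite.exists_min fun i => A i i
      refine ⟨A i i, hdiag i, ?_, hi⟩
      rw [← hA.2 i]
      exact Finset.single_le_sum (f := fun j => A i j) (fun j _ => hA.1 i j) (Finset.mem_univ i)
  set w := A *ᵥ x - x with hw
  have hanti : Antitone fun t => ‖A ^ t *ᵥ w‖ := by
    refine antitone_nat_of_succ_le fun t => ?_
    rw [pow_succ', ← Matrix.mulVec_mulVec]
    exact hA.norm_mulVec_le _
  have hbdd : BddBelow (Set.range fun t => ‖A ^ t *ᵥ w‖) :=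
    ⟨0, by rintro _ ⟨t, rfl⟩; exact norm_nonneg _⟩
  have hlim := tendsto_atTop_ciInf hanti hbdd
  set L := ⨅ t, ‖A ^ t *ᵥ w‖ with hL
  have hLle : ∀ t, L ≤ ‖A ^ t *ᵥ w‖ := fun t => ciInf_le hbdd t
  have hL0 : 0 ≤ L := le_ciInf fun t => norm_nonneg _
  rcases hL0.eq_or_lt with h0 | hpos
  · rw [← h0] at hlim
    exact tendsto_zero_iff_norm_tendsto_zero.2 hlim
  exfalso
  obtain ⟨k, hk⟩ := exists_nat_gt (2 * ‖x‖ / (L / 2))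
  rw [div_lt_iff₀ (by positivity)] at hk
  have hε : L < L + δ ^ k * (L / 2) := by
    have : 0 < δ ^ k * (L / 2) := by positivity
    linarith
  obtain ⟨s, hs⟩ := (hlim.eventually_lt_const hε).exists
  obtain ⟨i, hi⟩ : ∃ i, L ≤ |(A ^ (k + s) *ᵥ w) i| := by
    by_contra! h
    exact absurd ((pi_norm_lt_iff hpos).2 h) (not_lt.2 (hLle _))
  have hcomm : A *ᵥ (A ^ s *ᵥ x) - A ^ s *ᵥ x = A ^ s *ᵥ w := by
    rw [hw, Matrix.mulVec_sub, Matrix.mulVec_mulVec, Matrix.mulVec_mulVec, ← pow_succ,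
      ← pow_succ']
  have hneg : A *ᵥ -(A ^ s *ᵥ x) - -(A ^ s *ᵥ x) = -(A ^ s *ᵥ w) := by
    rw [Matrix.mulVec_neg, ← neg_sub', hcomm]
  have hxs := (hA.pow s).norm_mulVec_le x
  rw [pow_add, ← Matrix.mulVec_mulVec] at hi
  rcases le_abs.1 hi with hi | hi
  · have := hA.mul_half_le_two_mul_norm hδ hδ1 hδA k (x := A ^ s *ᵥ x) (M := ‖A ^ s *ᵥ w‖)
      (L := L) (i := i)
      (fun j => by rw [hcomm]; exact (le_abs_self _).trans (norm_le_pi_norm (A ^ s *ᵥ w) j))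
      (by rw [hcomm]; exact hi) (by linarith) (hLle s)
    linarith
  · have := hA.mul_half_le_two_mul_norm hδ hδ1 hδA k (x := -(A ^ s *ᵥ x)) (M := ‖A ^ s *ᵥ w‖)
      (L := L) (i := i)
      (fun j => by
        rw [hneg]
        exact (neg_le_abs _).trans (norm_le_pi_norm (A ^ s *ᵥ w) j))
      (by rw [hneg, Matrix.mulVec_neg]; exact hi)
      (by linarith) (hLle s)
    rw [norm_neg] at this
    linarith

lemma Matrix.exists_mul_mul_eq_self {n : ℕ} (M : Matrix (Fin n) (Fin n) ℝ) :
    ∃ G : Matrix (Fin n) (Fin n) ℝ, M * G * M = M := by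
  set f := Matrix.toLin' M with hf
  obtain ⟨g, hg⟩ := f.rangeRestrict.exists_rightInverse_of_surjective f.range_rangeRestrict
  obtain ⟨g', hg'⟩ := LinearMap.exists_extend g
  refine ⟨LinearMap.toMatrix' g', Matrix.toLin'.injective ?_⟩
  rw [Matrix.toLin'_mul, Matrix.toLin'_mul, Matrix.toLin'_toMatrix', ← hf]
  refine LinearMap.ext fun v => ?_
  have h1 : g' (f v) = g (f.rangeRestrict v) := by
    rw [← hg']; rfl
  have h2 := congrArg Subtype.val (LinearMap.congr_fun hg (f.rangeRestrict v))
  simp only [LinearMap.comp_apply, h1]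
  exact h2

lemma summable_of_add_le_half_mul {b : ℕ → ℝ} (hb : ∀ k, 0 ≤ b k) {m : ℕ}
    (h : ∀ k, b (k + m) ≤ b k / 2) : Summable b := by
  set S := ∑ k ∈ Finset.range m, b k
  refine summable_of_sum_range_le (c := 2 * S) hb fun N => ?_
  have h1 : ∑ k ∈ Finset.range N, b k ≤ ∑ k ∈ Finset.range (m + N), b k :=
    Finset.sum_le_sum_of_subset_of_nonneg (Finset.range_mono (by omega)) fun k _ _ => hb k
  rw [Finset.sum_range_add] at h1
  have h2 : ∑ k ∈ Finset.range N, b (m + k) ≤ ∑ k ∈ Finset.range N, b k / 2 :=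
    Finset.sum_le_sum fun k _ => by rw [add_comm]; exact h k
  rw [← Finset.sum_div] at h2
  linarith

lemma IsStochastic.summable_norm_pow_mul_sub_one {n : ℕ} {A : Matrix (Fin n) (Fin n) ℝ}
    (hA : IsStochastic A) (hdiag : ∀ i, 0 < A i i) :
    Summable fun t => ‖A ^ t * (A - 1)‖ := by
  have hlim : Tendsto (fun t => A ^ t * (A - 1)) atTop (𝓝 0) := by
    refine tendsto_pi_nhds.2 fun i => tendsto_pi_nhds.2 fun j => ?_
    have h := tendsto_pi_nhds.1 (hA.tendsto_pow_mulVec_sub hdiag (Pi.single j 1)) i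
    refine h.congr fun t => ?_
    have h1 : A *ᵥ Pi.single j 1 - Pi.single j 1 = (A - 1) *ᵥ Pi.single j (1 : ℝ) := by
      rw [Matrix.sub_mulVec, Matrix.one_mulVec]
    rw [h1, Matrix.mulVec_mulVec, Matrix.mulVec_single_one]
    rfl
  obtain ⟨G, hG⟩ := Matrix.exists_mul_mul_eq_self (A - 1)
  have hlim2 : Tendsto (fun t => ‖A ^ t * (A - 1)‖ * ‖G‖) atTop (𝓝 0) := by
    simpa using hlim.norm.mul_const ‖G‖
  obtain ⟨m, hm⟩ := (hlim2.eventually_lt_const (show (0 : ℝ) < 1 / 2 by norm_num)).exists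
  refine summable_of_add_le_half_mul (m := m) (fun _ => norm_nonneg _) fun k => ?_
  have hc : A ^ k * (A - 1) = (A - 1) * A ^ k := by
    rw [mul_sub, sub_mul, ← pow_succ, ← pow_succ', mul_one, one_mul]
  have h : A ^ (k + m) * (A - 1) = A ^ m * (A - 1) * G * (A ^ k * (A - 1)) := by
    rw [add_comm, pow_add, mul_assoc, hc]
    nth_rewrite 1 [← hG]
    noncomm_ring
  rw [h]
  calc ‖A ^ m * (A - 1) * G * (A ^ k * (A - 1))‖
      ≤ ‖A ^ m * (A - 1) * G‖ * ‖A ^ k * (A - 1)‖ := norm_mul_le _ _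
    _ ≤ ‖A ^ m * (A - 1)‖ * ‖G‖ * ‖A ^ k * (A - 1)‖ :=
      mul_le_mul_of_nonneg_right (norm_mul_le _ _) (norm_nonneg _)
    _ ≤ 1 / 2 * ‖A ^ k * (A - 1)‖ := mul_le_mul_of_nonneg_right hm.le (norm_nonneg _)
    _ = _ := by ring

lemma IsStochastic.exists_tendsto_pow_mulVec {n : ℕ} {A : Matrix (Fin n) (Fin n) ℝ}
    (hA : IsStochastic A) (hdiag : ∀ i, 0 < A i i) (x : Fin n → ℝ) :
    ∃ y, Tendsto (fun t => A ^ t *ᵥ x) atTop (𝓝 y) ∧ A *ᵥ y = y := by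
  have hc : CauchySeq fun t => A ^ t *ᵥ x := by
    refine cauchySeq_of_summable_dist (((hA.summable_norm_pow_mul_sub_one hdiag).mul_right
      ‖x‖).of_nonneg_of_le (fun _ => dist_nonneg) fun t => ?_)
    have h : A ^ (t + 1) *ᵥ x - A ^ t *ᵥ x = (A ^ t * (A - 1)) *ᵥ x := by
      rw [mul_sub, Matrix.sub_mulVec, ← pow_succ, mul_one]
    rw [dist_comm, dist_eq_norm, Nat.succ_eq_add_one, h]
    exact Matrix.linfty_opNorm_mulVec _ _
  obtain ⟨y, hy⟩ := cauchySeq_tendsto_of_complete hc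
  refine ⟨y, hy, ?_⟩
  have h1 : Tendsto (fun t => A *ᵥ (A ^ t *ᵥ x)) atTop (𝓝 (A *ᵥ y)) :=
    ((continuous_const.matrix_mulVec continuous_id).tendsto y).comp hy
  have h2 := (tendsto_add_atTop_iff_nat 1).2 hy
  refine tendsto_nhds_unique h1 (h2.congr fun t => ?_)
  rw [Matrix.mulVec_mulVec, ← pow_succ']

lemma IsStochastic.exists_pow_pos_of_reaches {n : ℕ} {A : Matrix (Fin n) (Fin n) ℝ}
    (hA : IsStochastic A) (hdiag : ∀ i, 0 < A i i) {v i : Fin n} (h : Reaches A v i) :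
    ∃ m, ∀ t, m ≤ t → 0 < (A ^ t) i v := by
  have mul_pos_of : ∀ (t : ℕ) (i j : Fin n), 0 < A i j → 0 < (A ^ t) j v →
      0 < (A ^ (t + 1)) i v := by
    intro t i j hij hjv
    rw [pow_succ', Matrix.mul_apply]
    exact (mul_pos hij hjv).trans_le (Finset.single_le_sum (f := fun l => A i l * (A ^ t) l v)
      (fun l _ => mul_nonneg (hA.1 i l) ((hA.pow t).1 l v)) (Finset.mem_univ j))
  have upward : ∀ (i : Fin n) (m : ℕ), 0 < (A ^ m) i v → ∀ t, m ≤ t → 0 < (A ^ t) i v := by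
    intro i m hm t ht
    induction t, ht using Nat.le_induction with
    | base => exact hm
    | succ t _ ih => exact mul_pos_of t i i (hdiag i) ih
  induction h with
  | refl => exact ⟨0, upward v 0 (by simp)⟩
  | tail _ hij ih =>
    obtain ⟨m, hm⟩ := ih
    exact ⟨m + 1, upward _ _ (mul_pos_of m _ _ hij (hm m le_rfl))⟩

lemma mulVec_factorsThrough {n K : ℕ} {C : Fin K → Finset (Fin n)}
    {A : Matrix (Fin n) (Fin n) ℝ} (hinfl : InterClusterCommonInfluence C A)
    {c : Fin n → Fin K} (hc : ∀ i p, i ∈ C p ↔ c i = p) {v : Fin n → ℝ}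
    (hv : v.FactorsThrough c) : (A *ᵥ v).FactorsThrough c := by
  have hCf : ∀ q, C q = Finset.univ.filter fun k => c k = q := fun q => by
    ext k; simp [hc]
  intro i j hij
  change ∑ k, A i k * v k = ∑ k, A j k * v k
  rw [← Finset.sum_fiberwise _ c, ← Finset.sum_fiberwise _ c]
  refine Finset.sum_congr rfl fun q _ => ?_
  rw [← hCf q]
  rcases (C q).eq_empty_or_nonempty with h | ⟨l, hl⟩
  · simp [h]
  · have hvl : ∀ k ∈ C q, v k = v l := fun k hk =>
      hv (((hc k q).1 hk).trans ((hc l q).1 hl).symm)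
    have h : ∀ i, ∑ k ∈ C q, A i k * v k = (∑ k ∈ C q, A i k) * v l := fun i => by
      rw [Finset.sum_mul]
      exact Finset.sum_congr rfl fun k hk => by rw [hvl k hk]
    rw [h, h, hinfl (c j) q i ((hc i _).2 hij) j ((hc j _).2 rfl)]

/-- A stochastic matrix preserving cluster-constant vectors, any two of whose rows in the same
cluster overlap, has only cluster-constant fixed vectors. -/
lemma IsStochastic.factorsThrough_of_mulVec_eq {n K : ℕ} {B : Matrix (Fin n) (Fin n) ℝ}
    (hB : IsStochastic B) {c : Fin n → Fin K}
    (hpres : ∀ v : Fin n → ℝ, v.FactorsThrough c → (B *ᵥ v).FactorsThrough c)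
    (hoverlap : ∀ i j, c i = c j → ∃ k, 0 < B i k ∧ 0 < B j k)
    {y : Fin n → ℝ} (hy : B *ᵥ y = y) : y.FactorsThrough c := by
  rcases isEmpty_or_nonempty (Fin n) with h | ⟨⟨i₀⟩⟩
  · exact fun i => h.elim i
  have hne : (Finset.univ.filter fun e : Fin n × Fin n => c e.1 = c e.2).Nonempty :=
    ⟨(i₀, i₀), by simp⟩
  obtain ⟨⟨i, j⟩, hij, hmax⟩ := Finset.exists_max_image _ (fun e => y e.1 - y e.2) hne
  simp only [Finset.mem_filter, Finset.mem_univ, true_and, Prod.forall] at hij hmax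
  set D := y i - y j with hD
  have hfloor : ∀ q, ∃ m, ∀ k, c k = q → m ≤ y k ∧ y k ≤ m + D := by
    intro q
    rcases (Finset.univ.filter fun k => c k = q).eq_empty_or_nonempty with h | h
    · refine ⟨0, fun k hk => ?_⟩
      have : k ∈ (Finset.univ.filter fun k => c k = q) := by simpa using hk
      simp [h] at this
    · obtain ⟨l, hl, hmin⟩ := Finset.exists_min_image _ y h
      simp only [Finset.mem_filter, Finset.mem_univ, true_and] at hl hmin
      refine ⟨y l, fun k hk => ⟨hmin k hk, ?_⟩⟩
      have := hmax k l (hk.trans hl.symm)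
      linarith
  choose f hf using hfloor
  have hD0 : 0 ≤ D := by simpa using hmax i i rfl
  obtain ⟨l, hil, hjl⟩ := hoverlap i j hij
  have hfc : (B *ᵥ (f ∘ c)) i = (B *ᵥ (f ∘ c)) j :=
    hpres _ (fun a b hab => congrArg f hab) hij
  have hexp : D = ∑ k, (B i k - B j k) * (y k - f (c k)) := by
    have hyi := congrFun hy i
    have hyj := congrFun hy j
    simp only [Matrix.mulVec, dotProduct, Function.comp_apply] at hyi hyj hfc
    simp only [sub_mul, mul_sub, Finset.sum_sub_distrib]
    rw [hyi, hyj, hfc, hD]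
    ring
  have hle : D ≤ ∑ k, (B i k - min (B i k) (B j k)) * D := by
    conv_lhs => rw [hexp]
    refine Finset.sum_le_sum fun k _ => ?_
    obtain ⟨h1, h2⟩ := hf (c k) k rfl
    have h3 : B i k - B j k ≤ B i k - min (B i k) (B j k) :=
      sub_le_sub_left (min_le_right _ _) _
    calc _ ≤ (B i k - min (B i k) (B j k)) * (y k - f (c k)) :=
          mul_le_mul_of_nonneg_right h3 (by linarith)
      _ ≤ _ := mul_le_mul_of_nonneg_left (by linarith) (sub_nonneg.2 (min_le_left _ _))
  rw [← Finset.sum_mul, Finset.sum_sub_distrib, hB.2] at hle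
  have hpos : 0 < ∑ k, min (B i k) (B j k) :=
    (lt_min hil hjl).trans_le (Finset.single_le_sum (f := fun k => min (B i k) (B j k))
      (fun k _ => le_min (hB.1 i k) (hB.1 j k)) (Finset.mem_univ l))
  have hD' : D ≤ 0 := by
    by_contra! h
    nlinarith [mul_pos hpos h]
  intro a b hab
  have h1 := hmax a b hab
  have h2 := hmax b a hab.symm
  linarith

/-- Summation by parts for the solution of `x (t + 1) = A *ᵥ x t + u t • a`. -/
lemma mulVec_recurrence_eq {n : ℕ} {A : Matrix (Fin n) (Fin n) ℝ} {a : Fin n → ℝ} {u : ℕ → ℝ}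
    {x : ℕ → Fin n → ℝ} (hx : ∀ t, x (t + 1) = A *ᵥ x t + u t • a) (t : ℕ) :
    x t = A ^ t *ᵥ x 0 + (∑ k ∈ Finset.range t, u k) • a +
      ∑ k ∈ Finset.range t, (∑ l ∈ Finset.range k, u l) • ((A ^ (t - 1 - k) * (A - 1)) *ᵥ a) := by
  induction t with
  | zero => simp
  | succ t ih =>
    have h : ∀ k ∈ Finset.range t,
        (∑ l ∈ Finset.range k, u l) • ((A ^ (t + 1 - 1 - k) * (A - 1)) *ᵥ a) =
        A *ᵥ ((∑ l ∈ Finset.range k, u l) • ((A ^ (t - 1 - k) * (A - 1)) *ᵥ a)) := by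
      intro k hk
      have hk' : t + 1 - 1 - k = t - 1 - k + 1 := by
        have := Finset.mem_range.1 hk
        omega
      rw [hk', pow_succ', Matrix.mulVec_smul, Matrix.mulVec_mulVec, mul_assoc]
    rw [hx, Finset.sum_range_succ _ t, Finset.sum_range_succ _ t, Finset.sum_congr rfl h,
      ← Matrix.mulVec_sum, Nat.add_sub_cancel, Nat.sub_self, pow_zero, one_mul,
      Matrix.sub_mulVec, Matrix.one_mulVec]
    conv_lhs => rw [ih]
    rw [Matrix.mulVec_add, Matrix.mulVec_add, Matrix.mulVec_smul, Matrix.mulVec_mulVec,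
      ← pow_succ', add_smul, smul_sub]
    abel

lemma IsStochastic.norm_le_of_mulVec_recurrence {n : ℕ} {A : Matrix (Fin n) (Fin n) ℝ}
    (hA : IsStochastic A) (hdiag : ∀ i, 0 < A i i) {a : Fin n → ℝ} {u : ℕ → ℝ} {Y : ℝ}
    (hsum : ∀ t, |∑ k ∈ Finset.range t, u k| ≤ Y)
    {x : ℕ → Fin n → ℝ} (hx : ∀ t, x (t + 1) = A *ᵥ x t + u t • a) (t : ℕ) :
    ‖x t‖ ≤ ‖x 0‖ + Y * ‖a‖ + Y * ‖a‖ * ∑' k, ‖A ^ k * (A - 1)‖ := by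
  have hY : 0 ≤ Y := (abs_nonneg _).trans (hsum 0)
  rw [mulVec_recurrence_eq hx t]
  refine norm_add₃_le.trans ?_
  refine add_le_add_three ((hA.pow t).norm_mulVec_le _) ?_ ?_
  · rw [norm_smul]
    exact mul_le_mul_of_nonneg_right (hsum t) (norm_nonneg a)
  · calc _ ≤ ∑ k ∈ Finset.range t, Y * ‖a‖ * ‖A ^ (t - 1 - k) * (A - 1)‖ := by
          refine norm_sum_le_of_le _ fun k _ => ?_
          rw [norm_smul, mul_assoc, mul_comm ‖a‖]
          exact mul_le_mul (hsum k) (Matrix.linfty_opNorm_mulVec _ _) (norm_nonneg _) hY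
      _ = Y * ‖a‖ * ∑ k ∈ Finset.range t, ‖A ^ k * (A - 1)‖ := by
          rw [← Finset.mul_sum, Finset.sum_range_reflect (fun k => ‖A ^ k * (A - 1)‖) t]
      _ ≤ _ := mul_le_mul_of_nonneg_left
          ((hA.summable_norm_pow_mul_sub_one hdiag).sum_le_tsum _ fun _ _ => norm_nonneg _)
          (mul_nonneg hY (norm_nonneg a))

theorem stmt6 {n K : ℕ} (C : Fin K → Finset (Fin n)) (hC : IsClustering C)
    (A : Matrix (Fin n) (Fin n) ℝ) (hA : IsStochastic A)
    (hinfl : InterClusterCommonInfluence C A)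
    (hspan : HasClusterSpanningTrees C A)
    (hdiag : ∀ i, 0 < A i i)
    (u : ℕ → ℝ) (Y : ℝ)
    (hu : ∀ t, |u t| ≤ Y)
    (hsum : ∀ t, |∑ k ∈ Finset.range (t + 1), u k| ≤ Y)
    (α : Fin K → ℝ)
    (I : ℕ → Fin n → ℝ)
    (hI : ∀ t p, ∀ i ∈ C p, I t i = α p * u t)
    (x : ℕ → Fin n → ℝ)
    (hx : ∀ t, x (t + 1) = A.mulVec (x t) + I t) :
    (∃ Mb : ℝ, ∀ t i, |x t i| ≤ Mb) ∧
      ∀ p, ∀ i ∈ C p, ∀ j ∈ C p,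
        Tendsto (fun t => |x t i - x t j|) atTop (𝓝 0) := by
  choose c hcmem using hC.2
  have hc : ∀ i p, i ∈ C p ↔ c i = p := by
    refine fun i p => ⟨fun h => ?_, fun h => h ▸ hcmem i⟩
    by_contra hne
    exact Finset.disjoint_left.1 (hC.1 _ _ hne) (hcmem i) h
  have hx' : ∀ t, x (t + 1) = A *ᵥ x t + u t • (α ∘ c) := by
    intro t
    rw [hx]
    congr 1
    ext i
    rw [hI t (c i) i (hcmem i), Pi.smul_apply, smul_eq_mul, mul_comm, Function.comp_apply]
  have hsum' : ∀ t, |∑ k ∈ Finset.range t, u k| ≤ Y := by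
    rintro (_ | t)
    · simpa using (abs_nonneg _).trans (hu 0)
    · exact hsum t
  refine ⟨⟨_, fun t i => (norm_le_pi_norm (x t) i).trans
    (hA.norm_le_of_mulVec_recurrence hdiag hsum' hx' t)⟩, ?_⟩
  have hpres : ∀ v : Fin n → ℝ, v.FactorsThrough c → (A *ᵥ v).FactorsThrough c :=
    fun v hv => mulVec_factorsThrough hinfl hc hv
  have hprespow : ∀ m, ∀ v : Fin n → ℝ, v.FactorsThrough c → (A ^ m *ᵥ v).FactorsThrough c := by
    intro m v hv
    induction m with
    | zero => simpa using hv
    | succ m ih => rw [pow_succ', ← Matrix.mulVec_mulVec]; exact hpres _ ih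
  have hdiff : ∀ t, (x t - A ^ t *ᵥ x 0).FactorsThrough c := by
    intro t
    induction t with
    | zero => simp [Function.FactorsThrough]
    | succ t ih =>
      have h : x (t + 1) - A ^ (t + 1) *ᵥ x 0 =
          A *ᵥ (x t - A ^ t *ᵥ x 0) + u t • (α ∘ c) := by
        rw [hx', Matrix.mulVec_sub, Matrix.mulVec_mulVec, ← pow_succ']
        abel
      intro i j hij
      rw [h, Pi.add_apply, Pi.add_apply, hpres _ ih hij]
      simp [hij]
  obtain ⟨y, hy, hfix⟩ := hA.exists_tendsto_pow_mulVec hdiag (x 0)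
  have hfixpow : ∀ m, A ^ m *ᵥ y = y := by
    intro m
    induction m with
    | zero => simp
    | succ m ih => rw [pow_succ, ← Matrix.mulVec_mulVec, hfix, ih]
  choose root hroot using hspan
  choose m hm using fun i => hA.exists_pow_pos_of_reaches hdiag (hroot (c i) i (hcmem i))
  have hle : ∀ i, m i ≤ Finset.univ.sup m := fun i => Finset.le_sup (Finset.mem_univ i)
  have hyc : y.FactorsThrough c :=
    (hA.pow (Finset.univ.sup m)).factorsThrough_of_mulVec_eq (hprespow _)
      (fun i j hij => ⟨root (c i), hm i _ (hle i), hij ▸ hm j _ (hle j)⟩) (hfixpow _)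
  intro p i hi j hj
  have hij : c i = c j := ((hc i p).1 hi).trans ((hc j p).1 hj).symm
  have hlim := ((tendsto_pi_nhds.1 hy i).sub (tendsto_pi_nhds.1 hy j)).abs
  rw [hyc hij, sub_self, abs_zero] at hlim
  refine hlim.congr fun t => ?_
  have h := hdiff t hij
  simp only [Pi.sub_apply] at h
  congr 1
  linarith
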